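/- Any nondegenerate m×n bimatrix game has a finite and odd number of Nash equilibria; in particular, at least one Nash equilibrium exists. -/

import Mathlib

open Matrix
open scoped Classical

noncomputable section

def IsMixed {ι : Type*} [Fintype ι] (x : ι → ℝ) : Prop :=
  (∀ i, 0 ≤ x i) ∧ ∑ i, x i = 1

def IsNash {ι κ : Type*} [Fintype ι] [Fintype κ]
    (A B : Matrix ι κ ℝ) (x : ι → ℝ) (y : κ → ℝ) : Prop :=
  IsMixed x ∧ IsMixed y ∧
    (∀ x' : ι → ℝ, IsMixed x' → x' ⬝ᵥ (A *ᵥ y) ≤ x ⬝ᵥ (A *ᵥ y)) ∧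
    (∀ y' : κ → ℝ, IsMixed y' → x ⬝ᵥ (B *ᵥ y') ≤ x ⬝ᵥ (B *ᵥ y))

def supp {ι : Type*} [Fintype ι] (x : ι → ℝ) : Finset ι :=
  Finset.univ.filter fun i => 0 < x i

def bestresp1 {ι κ : Type*} [Fintype ι] [Fintype κ] (A : Matrix ι κ ℝ) (y : κ → ℝ) :
    Finset ι :=
  Finset.univ.filter fun i => ∀ k, (A *ᵥ y) k ≤ (A *ᵥ y) i

def bestresp2 {ι κ : Type*} [Fintype ι] [Fintype κ] (B : Matrix ι κ ℝ) (x : ι → ℝ) :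
    Finset κ :=
  Finset.univ.filter fun j => ∀ k, (Bᵀ *ᵥ x) k ≤ (Bᵀ *ᵥ x) j

def Nondegenerate {ι κ : Type*} [Fintype ι] [Fintype κ] (A B : Matrix ι κ ℝ) : Prop :=
  (∀ x : ι → ℝ, IsMixed x → (bestresp2 B x).card ≤ (supp x).card) ∧
  (∀ y : κ → ℝ, IsMixed y → (bestresp1 A y).card ≤ (supp y).card)

/-!
After adding constants to the payoffs we may take `A` and `B` positive, as Lemke and Howson do. Then
`{x ≥ 0, Bᵀ x ≤ 1}` and `{y ≥ 0, A y ≤ 1}` are polytopes, simple by nondegeneracy. Label the facets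
`x i = 0` and `(A y) i = 1` by the row `i`, and the facets `y j = 0` and `(Bᵀ x) j = 1` by the
column `j`. The points of the product polytope with all labels are the origin and, up to rescaling,
the Nash equilibria, so it suffices that their number is even.

Fix a label `k`. For a vertex `z`, the number of ways to choose one facet through `z` for each label
other than `k` is odd exactly when `z` has all labels. Summed over all vertices this number is even:
a choice of facets cuts out an empty set or an edge, and an edge has two ends.
-/

open Module (finrank)

section HPolyhedron

variable {𝕜 E α J : Type*} [Field 𝕜] [LinearOrder 𝕜] [AddCommGroup E] [Module 𝕜 E]

/-- A polyhedron given by the family of linear inequalities `form i z ≤ bound i`. The inequalities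
are part of the data, since facets are counted by the index of their inequality. -/
structure HPolyhedron (𝕜 E α : Type*) [Field 𝕜] [AddCommGroup E] [Module 𝕜 E] where
  form : α → E →ₗ[𝕜] 𝕜
  bound : α → 𝕜

namespace HPolyhedron

/-- The solution set of the inequalities. -/
def carrier (P : HPolyhedron 𝕜 E α) : Set E :=
  {z | ∀ i, P.form i z ≤ P.bound i}

variable [Fintype α]

/-- The inequalities that hold with equality at `z`. -/
def tight (P : HPolyhedron 𝕜 E α) (z : E) : Finset α :=
  {i | P.form i z = P.bound i}

/-- The vertices of `P`, for `P` a simple polytope: the feasible points with as many tight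
inequalities as the dimension of the space. -/
def vertices (P : HPolyhedron 𝕜 E α) : Set E :=
  {z ∈ P.carrier | (P.tight z).card = finrank 𝕜 E}

/-- The completely labelled points of `P`, where `label i` is the label of the `i`-th inequality:
those at which every label occurs among the tight inequalities. -/
def completelyLabelled (P : HPolyhedron 𝕜 E α) (label : α → J) : Set E :=
  {z ∈ P.carrier | ∀ j, ∃ i ∈ P.tight z, label i = j}

/-- `P` is a simple polytope: its recession cone is trivial, so that it is bounded, and no point
lies on more facets than the dimension of the space. The empty polytope is allowed. -/
structure IsSimplePolytope (P : HPolyhedron 𝕜 E α) : Prop where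
  exists_form_pos : ∀ d ≠ 0, ∃ i, 0 < P.form i d
  card_tight_le : ∀ z ∈ P.carrier, (P.tight z).card ≤ finrank 𝕜 E

variable {P : HPolyhedron 𝕜 E α} {S : Finset α} {v z d : E} {i : α}

@[simp]
lemma mem_tight : i ∈ P.tight z ↔ P.form i z = P.bound i := by
  simp [tight]

variable [IsStrictOrderedRing 𝕜]

lemma tight_subset_of_mem_openSegment {x y : E} (hx : x ∈ P.carrier) (hy : y ∈ P.carrier)
    (hz : z ∈ openSegment 𝕜 x y) : P.tight z ⊆ P.tight x := by
  obtain ⟨p, q, hp, hq, hpq, rfl⟩ := hz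
  intro i hi
  simp only [mem_tight, map_add, map_smul, smul_eq_mul] at hi ⊢
  refine (hx i).antisymm (le_of_mul_le_mul_left ?_ hp)
  calc p * P.bound i = P.bound i - q * P.bound i := by
        rw [← one_sub_mul, ← hpq, add_sub_cancel_right]
    _ ≤ P.bound i - q * P.form i y := by gcongr; exact hy i
    _ = p * P.form i x := by rw [← hi, add_sub_cancel_right]

namespace IsSimplePolytope

lemma exists_pos_add_smul_mem_carrier (hP : P.IsSimplePolytope) (hz : z ∈ P.carrier) (hd : d ≠ 0)
    (htight : ∀ i ∈ P.tight z, P.form i d ≤ 0) :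
    ∃ t : 𝕜, 0 < t ∧ z + t • d ∈ P.carrier ∧ ∃ i ∈ P.tight (z + t • d), 0 < P.form i d := by
  let hitTime (i : α) : 𝕜 := (P.bound i - P.form i z) / P.form i d
  obtain ⟨i, hi, hmin⟩ := Finset.exists_min_image {i | 0 < P.form i d} hitTime
    (by simpa [Finset.Nonempty] using hP.exists_form_pos d hd)
  simp only [Finset.mem_filter, Finset.mem_univ, true_and] at hi hmin
  have hslack : P.form i z < P.bound i :=
    (hz i).lt_of_ne fun h => (htight i (mem_tight.2 h)).not_gt hi
  have htime : 0 < hitTime i := div_pos (sub_pos.2 hslack) hi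
  refine ⟨hitTime i, htime, fun j => ?_, i, ?_, hi⟩
  · rw [map_add, map_smul, smul_eq_mul, ← le_sub_iff_add_le']
    rcases lt_or_ge 0 (P.form j d) with hj | hj
    · exact (le_div_iff₀ hj).1 (hmin j hj)
    · exact (mul_nonpos_of_nonneg_of_nonpos htime.le hj).trans (sub_nonneg.2 (hz j))
  · rw [mem_tight, map_add, map_smul, smul_eq_mul, div_mul_cancel₀ _ hi.ne', add_sub_cancel]

lemma eq_zero_of_forall_mem_tight (hP : P.IsSimplePolytope) (hv : v ∈ P.vertices)
    (hd : ∀ i ∈ P.tight v, P.form i d = 0) : d = 0 := by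
  by_contra hd0
  obtain ⟨t, -, hfeas, i, hi, hpos⟩ :=
    hP.exists_pos_add_smul_mem_carrier hv.1 hd0 fun i hi => (hd i hi).le
  have hssub : P.tight v ⊂ P.tight (v + t • d) := by
    refine (Finset.ssubset_iff_of_subset fun j hj => ?_).2 ⟨i, hi, fun h => hpos.ne' (hd i h)⟩
    simpa [hd j hj] using hj
  have hlt := Finset.card_lt_card hssub
  rw [hv.2] at hlt
  exact hlt.not_ge (hP.card_tight_le _ hfeas)

lemma eq_of_tight_subset (hP : P.IsSimplePolytope) (hv : v ∈ P.vertices)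
    (h : P.tight v ⊆ P.tight z) : z = v := by
  refine sub_eq_zero.1 (hP.eq_zero_of_forall_mem_tight hv fun i hi => ?_)
  rw [map_sub, mem_tight.1 (h hi), mem_tight.1 hi, sub_self]

lemma finite_vertices (hP : P.IsSimplePolytope) : P.vertices.Finite :=
  .of_finite_image (Set.toFinite (P.tight '' P.vertices)) fun _ _ _ hw h =>
    hP.eq_of_tight_subset hw h.symm.subset

lemma vertices_subset_extremePoints (hP : P.IsSimplePolytope) :
    P.vertices ⊆ P.carrier.extremePoints 𝕜 := by
  intro v hv
  refine mem_extremePoints_iff_left.2 ⟨hv.1, fun x hx y hy hvxy => ?_⟩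
  exact hP.eq_of_tight_subset hv (tight_subset_of_mem_openSegment hx hy hvxy)

variable [FiniteDimensional 𝕜 E]

lemma exists_form_eq (hP : P.IsSimplePolytope) (hv : v ∈ P.vertices) (c : α → 𝕜) :
    ∃ d, ∀ i ∈ P.tight v, P.form i d = c i := by
  let restrict : E →ₗ[𝕜] (P.tight v → 𝕜) := LinearMap.pi fun i => P.form i
  have hinj : Function.Injective restrict := (injective_iff_map_eq_zero restrict).2 fun d hd =>
    hP.eq_zero_of_forall_mem_tight hv fun i hi => congrFun hd ⟨i, hi⟩
  have hrank : finrank 𝕜 E = finrank 𝕜 (P.tight v → 𝕜) := by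
    rw [Module.finrank_fintype_fun_eq_card, Fintype.card_coe, hv.2]
  obtain ⟨d, hd⟩ := (LinearMap.injective_iff_surjective_of_finrank_eq_finrank hrank).1 hinj
    fun i => c i
  exact ⟨d, fun i hi => congrFun hd ⟨i, hi⟩⟩

lemma exists_edge_direction (hP : P.IsSimplePolytope) (hv : v ∈ P.vertices) (hi : i ∉ S)
    (hvS : insert i S = P.tight v) :
    ∃ d, P.form i d = -1 ∧ (∀ j ∈ S, P.form j d = 0) ∧
      ∀ w, S ⊆ P.tight w → w = v + (P.bound i - P.form i w) • d := by
  obtain ⟨d, hd⟩ := hP.exists_form_eq hv fun j => if j = i then -1 else 0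
  rw [← hvS, Finset.forall_mem_insert, if_pos rfl] at hd
  have hdS : ∀ j ∈ S, P.form j d = 0 := fun j hj =>
    (hd.2 j hj).trans (if_neg (ne_of_mem_of_not_mem hj hi))
  refine ⟨d, hd.1, hdS, fun w hw => hP.eq_of_tight_subset hv ?_ |> eq_add_of_sub_eq⟩
  rw [← hvS, Finset.insert_subset_iff]
  refine ⟨by simp [hd.1], fun j hj => ?_⟩
  simpa [hdS j hj] using hw hj

lemma exists_edge (hP : P.IsSimplePolytope) (hv : v ∈ P.vertices) (hS : S ⊆ P.tight v)
    (hcard : S.card + 1 = finrank 𝕜 E) :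
    ∃ v' ∈ P.vertices, v ≠ v' ∧ S ⊆ P.tight v' ∧
      ∀ w ∈ P.carrier, S ⊆ P.tight w → w ∈ segment 𝕜 v v' := by
  obtain ⟨i, hi, hvS⟩ := Finset.exists_eq_insert_iff.2 ⟨hS, hcard.trans hv.2.symm⟩
  obtain ⟨d, hdi, hdS, hline⟩ := hP.exists_edge_direction hv hi hvS
  have hd : d ≠ 0 := by rintro rfl; simp at hdi
  have hdv : ∀ j ∈ P.tight v, P.form j d ≤ 0 := by
    rw [← hvS, Finset.forall_mem_insert, hdi]
    exact ⟨neg_one_lt_zero.le, fun j hj => (hdS j hj).le⟩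
  obtain ⟨t, ht, hfeas, i', hi', hpos⟩ := hP.exists_pos_add_smul_mem_carrier hv.1 hd hdv
  have hi'S : i' ∉ S := fun h => hpos.ne' (hdS i' h)
  have hS' : S ⊆ P.tight (v + t • d) := fun j hj => by simpa [hdS j hj] using hS hj
  have hcard' : finrank 𝕜 E ≤ (P.tight (v + t • d)).card := by
    rw [← hcard, ← Finset.card_insert_of_notMem hi'S]
    exact Finset.card_le_card (Finset.insert_subset hi' hS')
  refine ⟨v + t • d, ⟨hfeas, (hP.card_tight_le _ hfeas).antisymm hcard'⟩, ?_, hS',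
    fun w hw hwS => ?_⟩
  · simpa using ⟨ht.ne', hd⟩
  · have hw_eq := hline w hwS
    set s := P.bound i - P.form i w
    have hs0 : 0 ≤ s := sub_nonneg.2 (hw i)
    have hst : s ≤ t := by
      have hle : P.form i' w ≤ P.form i' (v + t • d) := (hw i').trans (mem_tight.1 hi').ge
      rw [hw_eq, map_add, map_add, map_smul, map_smul] at hle
      exact le_of_mul_le_mul_right (le_of_add_le_add_left hle) hpos
    rw [segment_eq_image']
    refine ⟨s / t, ⟨div_nonneg hs0 ht.le, div_le_one_of_le₀ hst ht.le⟩, ?_⟩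
    simp only [add_sub_cancel_left, smul_smul, div_mul_cancel₀ _ ht.ne', ← hw_eq]

lemma even_ncard_vertices_subset_tight (hP : P.IsSimplePolytope)
    (hcard : S.card + 1 = finrank 𝕜 E) : Even {v ∈ P.vertices | S ⊆ P.tight v}.ncard := by
  rcases Set.eq_empty_or_nonempty {v ∈ P.vertices | S ⊆ P.tight v} with hempty | ⟨v, hv, hS⟩
  · simp [hempty]
  obtain ⟨v', hv', hne, hS', hseg⟩ := hP.exists_edge hv hS hcard
  have hpair : {w ∈ P.vertices | S ⊆ P.tight w} = {v, v'} := by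
    refine Set.Subset.antisymm (fun w ⟨hw, hwS⟩ => ?_) ?_
    · have hext := mem_extremePoints_iff_forall_segment.1 (hP.vertices_subset_extremePoints hw)
      exact (hext.2 v hv.1 v' hv'.1 (hseg w hw.1 hwS)).imp Eq.symm Eq.symm
    · rintro w (rfl | rfl)
      exacts [⟨hv, hS⟩, ⟨hv', hS'⟩]
  rw [hpair, Set.ncard_pair hne]
  exact even_two

end IsSimplePolytope

end HPolyhedron

lemma card_subtype_ne_add_one [Fintype J] (k : J) :
    Fintype.card {j // j ≠ k} + 1 = Fintype.card J := by
  rw [Fintype.card_subtype_compl, Fintype.card_subtype_eq]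
  exact Nat.sub_add_cancel (Fintype.card_pos_iff.2 ⟨k⟩)

lemma odd_prod_card_fiber_iff [Fintype J] (label : α → J) (k : J) {T : Finset α}
    (hT : T.card = Fintype.card J) :
    Odd (∏ j : {j // j ≠ k}, (T.filter fun i => label i = j).card) ↔
      ∀ j, ∃ i ∈ T, label i = j := by
  let t (j : J) : ℕ := (T.filter fun i => label i = j).card
  have hsum : t k + ∑ j : {j // j ≠ k}, t j = Fintype.card J := by
    rw [← Fintype.sum_eq_add_sum_subtype_ne, ← hT]
    exact (Finset.card_eq_sum_card_fiberwise fun i _ => Finset.mem_univ (label i)).symm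
  constructor
  · intro hodd
    have ht_odd (j : {j // j ≠ k}) : Odd (t j) :=
      hodd.of_dvd_nat (Finset.dvd_prod_of_mem _ (Finset.mem_univ j))
    -- All other fibres being odd, the size of `T` decides the parity of the fibre over `k`.
    have htk : Odd (t k) := by
      have hparity : Odd (∑ j : {j // j ≠ k}, t j) ↔ Odd (Fintype.card {j // j ≠ k}) := by
        simp [Finset.odd_sum_iff_odd_card_odd, ht_odd, -ne_eq]
      have hcard := card_subtype_ne_add_one k
      grind
    intro j
    have hj : 0 < t j := by
      by_cases h : j = k
      · exact h ▸ htk.pos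
      · exact (ht_odd ⟨j, h⟩).pos
    simpa [t, Finset.card_pos, Finset.Nonempty] using hj
  · intro hsurj
    have hinj : Set.InjOn label T := by
      refine Finset.injOn_of_surjOn_of_card_le label (t := Finset.univ) (by simp) ?_ hT.le
      intro j _
      exact hsurj j
    have ht (j : J) : t j = 1 := by
      obtain ⟨i, hi, rfl⟩ := hsurj j
      refine Finset.card_eq_one.2 ⟨i, Finset.ext fun i' => ?_⟩
      simp only [Finset.mem_filter, Finset.mem_singleton]
      exact ⟨fun h => hinj h.1 hi h.2, by rintro rfl; exact ⟨hi, rfl⟩⟩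
    simp only [t] at ht
    simp [ht]

lemma prod_card_fiber_eq_card_transversals {K : Type*} [Fintype K] [DecidableEq K] [Fintype α]
    (label : α → J) (f : K → J) (T : Finset α) :
    ∏ j, (T.filter fun i => label i = f j).card =
      (({s : K → α | ∀ j, label (s j) = f j} : Finset _).filter fun s => ∀ j, s j ∈ T).card := by
  rw [← Fintype.card_piFinset]
  congr 1
  ext s
  simp [forall_and, and_comm]

namespace HPolyhedron.IsSimplePolytope

variable [Fintype α] [Fintype J] {P : HPolyhedron 𝕜 E α}

lemma completelyLabelled_subset_vertices (hP : P.IsSimplePolytope)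
    (hJ : Fintype.card J = finrank 𝕜 E) (label : α → J) :
    P.completelyLabelled label ⊆ P.vertices := by
  intro z hz
  refine ⟨hz.1, (hP.card_tight_le z hz.1).antisymm ?_⟩
  rw [← hJ, ← Finset.card_univ]
  exact Finset.card_le_card_of_surjOn label fun j _ => hz.2 j

variable [IsStrictOrderedRing 𝕜]

lemma finite_completelyLabelled (hP : P.IsSimplePolytope) (hJ : Fintype.card J = finrank 𝕜 E)
    (label : α → J) : (P.completelyLabelled label).Finite :=
  hP.finite_vertices.subset (hP.completelyLabelled_subset_vertices hJ label)

lemma even_ncard_vertices_transversal_tight [FiniteDimensional 𝕜 E] (hP : P.IsSimplePolytope)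
    (hJ : Fintype.card J = finrank 𝕜 E) {label : α → J} {k : J} {s : {j // j ≠ k} → α}
    (hs : ∀ j, label (s j) = j) : Even {v ∈ P.vertices | ∀ j, s j ∈ P.tight v}.ncard := by
  have hinj : Function.Injective s := fun j j' h => Subtype.ext <| by rw [← hs j, h, hs j']
  have hcard : (Finset.univ.image s).card + 1 = finrank 𝕜 E := by
    rw [Finset.card_image_of_injective _ hinj, Finset.card_univ, card_subtype_ne_add_one, hJ]
  simpa [Finset.image_subset_iff] using hP.even_ncard_vertices_subset_tight hcard

theorem even_ncard_completelyLabelled [FiniteDimensional 𝕜 E] [Nonempty J]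
    (hP : P.IsSimplePolytope) (hJ : Fintype.card J = finrank 𝕜 E) (label : α → J) :
    Even (P.completelyLabelled label).ncard := by
  obtain ⟨k⟩ := ‹Nonempty J›
  let V : Finset E := hP.finite_vertices.toFinset
  have hV {z : E} : z ∈ V ↔ z ∈ P.vertices := hP.finite_vertices.mem_toFinset
  let transversals : Finset ({j // j ≠ k} → α) := {s | ∀ j, label (s j) = j}
  let choices (z : E) : ℕ := (transversals.filter fun s => ∀ j, s j ∈ P.tight z).card
  have hchoices {z : E} (hz : z ∈ P.vertices) :
      Odd (choices z) ↔ ∀ j, ∃ i ∈ P.tight z, label i = j := by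
    rw [← odd_prod_card_fiber_iff label k (hz.2.trans hJ.symm),
      prod_card_fiber_eq_card_transversals]
  have hlabelled : P.completelyLabelled label = ↑(V.filter fun z => Odd (choices z)) := by
    ext z
    rw [Finset.coe_filter, Set.mem_ofPred_eq, hV]
    exact ⟨fun hz => have hv := hP.completelyLabelled_subset_vertices hJ label hz
        ⟨hv, (hchoices hv).2 hz.2⟩, fun ⟨hv, hodd⟩ => ⟨hv.1, (hchoices hv).1 hodd⟩⟩
  have hsum : ∑ z ∈ V, choices z =
      ∑ s ∈ transversals, (V.filter fun z => ∀ j, s j ∈ P.tight z).card :=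
    Finset.sum_card_bipartiteAbove_eq_sum_card_bipartiteBelow _
  rw [hlabelled, Set.ncard_coe_finset, ← Nat.not_odd_iff_even, ← Finset.odd_sum_iff_odd_card_odd,
    Nat.not_odd_iff_even, hsum]
  refine Finset.even_sum _ fun s hs => ?_
  have heven := hP.even_ncard_vertices_transversal_tight hJ (Finset.mem_filter.1 hs).2
  simpa only [← Set.ncard_coe_finset, Finset.coe_filter, hV] using heven

end HPolyhedron.IsSimplePolytope

end HPolyhedron

section HPolyhedronProd

variable {𝕜 E E' α α' : Type*} [Field 𝕜] [LinearOrder 𝕜] [AddCommGroup E]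
  [Module 𝕜 E] [AddCommGroup E'] [Module 𝕜 E']
  {P : HPolyhedron 𝕜 E α} {Q : HPolyhedron 𝕜 E' α'}

namespace HPolyhedron

/-- The product of two polyhedra, described by the inequalities of both factors. -/
def prod (P : HPolyhedron 𝕜 E α) (Q : HPolyhedron 𝕜 E' α') :
    HPolyhedron 𝕜 (E × E') (α ⊕ α') where
  form := Sum.elim (fun i => P.form i ∘ₗ LinearMap.fst 𝕜 E E')
    (fun i => Q.form i ∘ₗ LinearMap.snd 𝕜 E E')
  bound := Sum.elim P.bound Q.bound

lemma mem_carrier_prod {z : E × E'} :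
    z ∈ (P.prod Q).carrier ↔ z.1 ∈ P.carrier ∧ z.2 ∈ Q.carrier := by
  simp [carrier, prod]

variable [Fintype α] [Fintype α']

lemma tight_prod (z : E × E') :
    (P.prod Q).tight z = (P.tight z.1).disjSum (Q.tight z.2) := by
  ext (i | i) <;> simp [prod]

lemma IsSimplePolytope.prod [FiniteDimensional 𝕜 E] [FiniteDimensional 𝕜 E']
    (hP : P.IsSimplePolytope) (hQ : Q.IsSimplePolytope) : (P.prod Q).IsSimplePolytope where
  exists_form_pos := by
    rintro ⟨d, d'⟩ hd
    by_cases h : d = 0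
    · obtain ⟨i, hi⟩ := hQ.exists_form_pos d' (by rintro rfl; exact hd (by simp [h]))
      exact ⟨.inr i, hi⟩
    · obtain ⟨i, hi⟩ := hP.exists_form_pos d h
      exact ⟨.inl i, hi⟩
  card_tight_le := by
    intro z hz
    rw [mem_carrier_prod] at hz
    rw [tight_prod, Finset.card_disjSum, Module.finrank_prod]
    exact add_le_add (hP.card_tight_le _ hz.1) (hQ.card_tight_le _ hz.2)

end HPolyhedron

end HPolyhedronProd

section OrderedSemiring

variable {R ι κ : Type*} [CommSemiring R] [PartialOrder R] [IsStrictOrderedRing R] [Fintype ι]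
  {x u : ι → R}

lemma dotProduct_pos_of_ne_zero (hx : 0 ≤ x) (hx0 : x ≠ 0) (hu : ∀ i, 0 < u i) : 0 < x ⬝ᵥ u := by
  obtain ⟨i, hi⟩ := Function.ne_iff.1 hx0
  exact Finset.sum_pos' (fun j _ => mul_nonneg (hx j) (hu j).le)
    ⟨i, Finset.mem_univ i, mul_pos ((hx i).lt_of_ne' hi) (hu i)⟩

lemma mulVec_pos_of_ne_zero {M : Matrix κ ι R} (hM : ∀ j i, 0 < M j i) (hx : 0 ≤ x)
    (hx0 : x ≠ 0) (j : κ) : 0 < (M *ᵥ x) j := by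
  rw [mulVec, dotProduct_comm]
  exact dotProduct_pos_of_ne_zero hx hx0 (hM j)

end OrderedSemiring

section MixedStrategies

/-- The best response condition: the payoffs `u` are at most `c`, and `x` plays only pure strategies
of payoff exactly `c`. -/
def BestResponseCondition {ι : Type*} (x u : ι → ℝ) (c : ℝ) : Prop :=
  ∀ i, u i ≤ c ∧ (x i = 0 ∨ u i = c)

lemma BestResponseCondition.smul {ι : Type*} {x u : ι → ℝ} {c : ℝ}
    (h : BestResponseCondition x u c) (s : ℝ) {t : ℝ} (ht : 0 ≤ t) :
    BestResponseCondition (s • x) (t • u) (t * c) := fun i =>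
  ⟨mul_le_mul_of_nonneg_left (h i).1 ht,
    (h i).2.imp (fun hx => by simp [hx]) (fun hu => by simp [hu])⟩

variable {ι κ : Type*} [Fintype ι] {x u : ι → ℝ} {c : ℝ}

lemma IsMixed.ne_zero (hx : IsMixed x) : x ≠ 0 := by
  rintro rfl
  simpa using hx.2

lemma IsMixed.dotProduct_const (hx : IsMixed x) (c : ℝ) : (x ⬝ᵥ fun _ => c) = c := by
  rw [dotProduct, ← Finset.sum_mul, hx.2, one_mul]

lemma IsMixed.add_const_mulVec (hx : IsMixed x) (M : Matrix κ ι ℝ) (c : ℝ) :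
    (M + of fun _ _ => c) *ᵥ x = M *ᵥ x + fun _ => c := by
  rw [add_mulVec]
  congr 1
  ext j
  exact (dotProduct_comm _ _).trans (hx.dotProduct_const c)

lemma IsMixed.dotProduct_mulVec_pos [Fintype κ] {y : κ → ℝ} {M : Matrix κ ι ℝ} (hy : IsMixed y)
    (hx : IsMixed x) (hM : ∀ j i, 0 < M j i) : 0 < y ⬝ᵥ M *ᵥ x :=
  dotProduct_pos_of_ne_zero hy.1 hy.ne_zero (mulVec_pos_of_ne_zero hM hx.1 hx.ne_zero)

lemma isMixed_single (i : ι) : IsMixed (Pi.single i 1) :=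
  ⟨(Pi.single_nonneg (α := fun _ => ℝ)).2 zero_le_one, by simp⟩

/-- The rescaling of a nonnegative nonzero vector to a mixed strategy. -/
def toMixed (x : ι → ℝ) : ι → ℝ :=
  (∑ i, x i)⁻¹ • x

lemma isMixed_toMixed (hx : 0 ≤ x) (hx0 : x ≠ 0) : IsMixed (toMixed x) := by
  have hsum := Fintype.sum_pos (hx.lt_of_ne' hx0)
  refine ⟨fun i => mul_nonneg (inv_nonneg.2 hsum.le) (hx i), ?_⟩
  simp only [toMixed, Pi.smul_apply, smul_eq_mul, ← Finset.mul_sum]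
  exact inv_mul_cancel₀ hsum.ne'

lemma IsMixed.toMixed_smul (hx : IsMixed x) (hc : c ≠ 0) : toMixed (c • x) = x := by
  simp [toMixed, ← Finset.mul_sum, hx.2, smul_smul, hc]

lemma supp_toMixed (hx : 0 ≤ x) (hx0 : x ≠ 0) :
    supp (toMixed x) = Finset.univ.filter fun i => ¬x i = 0 := by
  have hsum := Fintype.sum_pos (hx.lt_of_ne' hx0)
  ext i
  have hxi : 0 < x i ↔ x i ≠ 0 := (hx i).lt_iff_ne'
  simp [supp, toMixed, hsum, hxi]

lemma BestResponseCondition.dotProduct_eq (h : BestResponseCondition x u c) (hx : IsMixed x) :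
    x ⬝ᵥ u = c := by
  rw [← hx.dotProduct_const c]
  refine Finset.sum_congr rfl fun i _ => ?_
  rcases (h i).2 with h | h <;> simp [h]

lemma IsMixed.dotProduct_le (hx : IsMixed x) (h : ∀ i, u i ≤ c) : x ⬝ᵥ u ≤ c := by
  rw [← hx.dotProduct_const c]
  exact dotProduct_le_dotProduct_of_nonneg_left h hx.1

lemma IsMixed.forall_dotProduct_le_iff (hx : IsMixed x) :
    (∀ x', IsMixed x' → x' ⬝ᵥ u ≤ x ⬝ᵥ u) ↔ BestResponseCondition x u (x ⬝ᵥ u) := by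
  refine ⟨fun h => ?_, fun h x' hx' => hx'.dotProduct_le fun i => (h i).1⟩
  have hle (i : ι) : u i ≤ x ⬝ᵥ u := by simpa using h _ (isMixed_single i)
  have hloss : ∑ i, x i * (x ⬝ᵥ u - u i) = 0 := by
    simp only [mul_sub, Finset.sum_sub_distrib, ← Finset.sum_mul, hx.2, one_mul]
    exact sub_self _
  refine fun i => ⟨hle i, ?_⟩
  have hzero := (Finset.sum_eq_zero_iff_of_nonneg fun i _ =>
    mul_nonneg (hx.1 i) (sub_nonneg.2 (hle i))).1 hloss i (Finset.mem_univ i)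
  exact (mul_eq_zero.1 hzero).imp_right fun h => (sub_eq_zero.1 h).symm

end MixedStrategies

section BestResponsePolytope

variable {ι κ : Type*} [Fintype ι] {M : Matrix κ ι ℝ} {x : ι → ℝ}

/-- The best response polytope `{x ≥ 0, M x ≤ 1}` of unnormalized mixed strategies. -/
def bestResponsePolytope (M : Matrix κ ι ℝ) : HPolyhedron ℝ (ι → ℝ) (ι ⊕ κ) where
  form := Sum.elim (fun i => -LinearMap.proj i) (fun j => LinearMap.proj j ∘ₗ M.mulVecLin)
  bound := Sum.elim 0 1

lemma mem_carrier_bestResponsePolytope :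
    x ∈ (bestResponsePolytope M).carrier ↔ 0 ≤ x ∧ ∀ j, (M *ᵥ x) j ≤ 1 := by
  simp [HPolyhedron.carrier, bestResponsePolytope, Pi.le_def]

variable [Fintype κ]

lemma tight_bestResponsePolytope (M : Matrix κ ι ℝ) (x : ι → ℝ) :
    (bestResponsePolytope M).tight x = (Finset.univ.filter fun i => x i = 0).disjSum
      (Finset.univ.filter fun j => (M *ᵥ x) j = 1) := by
  ext (i | j) <;> simp [bestResponsePolytope]

lemma filter_mulVec_eq_one_subset_bestresp1 (hx : 0 ≤ x) (hM : ∀ j, (M *ᵥ x) j ≤ 1) :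
    (Finset.univ.filter fun j => (M *ᵥ x) j = 1) ⊆ bestresp1 M (toMixed x) := by
  intro j hj
  simp only [bestresp1, toMixed, mulVec_smul, Pi.smul_apply, smul_eq_mul, Finset.mem_filter,
    Finset.mem_univ, true_and] at hj ⊢
  rw [hj]
  exact fun k => mul_le_mul_of_nonneg_left (hM k) (inv_nonneg.2 (Finset.sum_nonneg fun i _ => hx i))

lemma card_tight_bestResponsePolytope_le
    (hnd : ∀ x, IsMixed x → (bestresp1 M x).card ≤ (supp x).card)
    (hx : x ∈ (bestResponsePolytope M).carrier) :
    ((bestResponsePolytope M).tight x).card ≤ Fintype.card ι := by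
  rw [mem_carrier_bestResponsePolytope] at hx
  rw [tight_bestResponsePolytope, Finset.card_disjSum]
  by_cases hx0 : x = 0
  · simp [hx0]
  calc (Finset.univ.filter fun i => x i = 0).card +
        (Finset.univ.filter fun j => (M *ᵥ x) j = 1).card
      ≤ (Finset.univ.filter fun i => x i = 0).card + (supp (toMixed x)).card := by
        gcongr
        exact (Finset.card_le_card (filter_mulVec_eq_one_subset_bestresp1 hx.1 hx.2)).trans
          (hnd _ (isMixed_toMixed hx.1 hx0))
    _ = Fintype.card ι := by
        rw [supp_toMixed hx.1 hx0, Finset.card_filter_add_card_filter_not, Finset.card_univ]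

lemma isSimplePolytope_bestResponsePolytope [Nonempty κ] (hM : ∀ j i, 0 < M j i)
    (hnd : ∀ x, IsMixed x → (bestresp1 M x).card ≤ (supp x).card) :
    (bestResponsePolytope M).IsSimplePolytope where
  exists_form_pos := by
    intro d hd
    by_cases hneg : ∃ i, d i < 0
    · obtain ⟨i, hi⟩ := hneg
      exact ⟨.inl i, neg_pos.2 hi⟩
    · obtain ⟨j⟩ := ‹Nonempty κ›
      push Not at hneg
      exact ⟨.inr j, mulVec_pos_of_ne_zero hM hneg hd j⟩
  card_tight_le := by
    intro x hx
    rw [Module.finrank_fintype_fun_eq_card]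
    exact card_tight_bestResponsePolytope_le hnd hx

end BestResponsePolytope

section Game

variable {ι κ : Type*} [Fintype ι] [Fintype κ] {A B : Matrix ι κ ℝ} {x : ι → ℝ} {y : κ → ℝ}

lemma isNash_iff : IsNash A B x y ↔ IsMixed x ∧ IsMixed y ∧
    BestResponseCondition x (A *ᵥ y) (x ⬝ᵥ A *ᵥ y) ∧
    BestResponseCondition y (Bᵀ *ᵥ x) (y ⬝ᵥ Bᵀ *ᵥ x) := by
  refine and_congr_right fun hx => and_congr_right fun hy => ?_
  rw [← hx.forall_dotProduct_le_iff, ← hy.forall_dotProduct_le_iff]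
  simp only [dotProduct_transpose_mulVec]

/-- The points of the product of the two best response polytopes of the game at which every pure
strategy, of either player, is unplayed or a best response. The labels are the pure strategies
`ι ⊕ κ`; the inequalities of the second polytope are indexed by `κ ⊕ ι`, hence the `Sum.swap`. -/
def equilibriumPoints (A B : Matrix ι κ ℝ) : Set ((ι → ℝ) × (κ → ℝ)) :=
  ((bestResponsePolytope Bᵀ).prod (bestResponsePolytope A)).completelyLabelled
    (Sum.elim id Sum.swap)

lemma mk_mem_equilibriumPoints : (x, y) ∈ equilibriumPoints A B ↔ 0 ≤ x ∧ 0 ≤ y ∧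
    BestResponseCondition x (A *ᵥ y) 1 ∧ BestResponseCondition y (Bᵀ *ᵥ x) 1 := by
  simp only [equilibriumPoints, HPolyhedron.completelyLabelled, HPolyhedron.mem_carrier_prod,
    mem_carrier_bestResponsePolytope, HPolyhedron.tight_prod, tight_bestResponsePolytope,
    BestResponseCondition, Set.mem_ofPred_eq, Sum.forall, Sum.exists, Finset.inl_mem_disjSum,
    Finset.inr_mem_disjSum, Finset.mem_filter, Finset.mem_univ, true_and, Sum.elim_inl,
    Sum.elim_inr, id_eq, Sum.swap_inl, Sum.swap_inr, Sum.inl.injEq, Sum.inr.injEq, reduceCtorEq,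
    and_false, exists_false, false_or, exists_eq_right, forall_and, or_comm]
  tauto

lemma zero_mem_equilibriumPoints : (0 : (ι → ℝ) × (κ → ℝ)) ∈ equilibriumPoints A B :=
  mk_mem_equilibriumPoints.2 (by simp [BestResponseCondition])

lemma ne_zero_of_mk_mem_equilibriumPoints (h : (x, y) ∈ equilibriumPoints A B)
    (hxy : (x, y) ≠ 0) : x ≠ 0 ∧ y ≠ 0 := by
  obtain ⟨-, -, hx, hy⟩ := mk_mem_equilibriumPoints.1 h
  refine not_or.1 fun h0 => hxy (Prod.mk_eq_zero.2 ?_)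
  rcases h0 with rfl | rfl
  · exact ⟨rfl, funext fun j => (hy j).2.resolve_right (by simp)⟩
  · exact ⟨funext fun i => (hx i).2.resolve_right (by simp), rfl⟩

/-- The rescaling that sends a Nash equilibrium to a point of the product of the best response
polytopes: each strategy is divided by the equilibrium payoff of the opponent. -/
def divPayoff (A B : Matrix ι κ ℝ) (p : (ι → ℝ) × (κ → ℝ)) : (ι → ℝ) × (κ → ℝ) :=
  ((p.2 ⬝ᵥ Bᵀ *ᵥ p.1)⁻¹ • p.1, (p.1 ⬝ᵥ A *ᵥ p.2)⁻¹ • p.2)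

lemma IsNash.divPayoff_mem (h : IsNash A B x y) (hA : ∀ i j, 0 < A i j)
    (hB : ∀ i j, 0 < B i j) :
    divPayoff A B (x, y) ∈ equilibriumPoints A B \ {0} := by
  obtain ⟨hx, hy, hbrx, hbry⟩ := isNash_iff.1 h
  have ha := hx.dotProduct_mulVec_pos hy hA
  have hb := hy.dotProduct_mulVec_pos hx (M := Bᵀ) fun j i => hB i j
  refine ⟨mk_mem_equilibriumPoints.2 ⟨smul_nonneg (inv_nonneg.2 hb.le) hx.1,
    smul_nonneg (inv_nonneg.2 ha.le) hy.1, ?_, ?_⟩, fun h0 => ?_⟩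
  · rw [mulVec_smul, ← inv_mul_cancel₀ ha.ne']
    exact hbrx.smul _ (inv_nonneg.2 ha.le)
  · rw [mulVec_smul, ← inv_mul_cancel₀ hb.ne']
    exact hbry.smul _ (inv_nonneg.2 hb.le)
  · exact smul_ne_zero (inv_ne_zero hb.ne') hx.ne_zero (congrArg Prod.fst h0)

lemma toMixed_divPayoff (hx : IsMixed x) (hy : IsMixed y) (hA : ∀ i j, 0 < A i j)
    (hB : ∀ i j, 0 < B i j) : Prod.map toMixed toMixed (divPayoff A B (x, y)) = (x, y) := by
  have ha := hx.dotProduct_mulVec_pos hy hA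
  have hb := hy.dotProduct_mulVec_pos hx (M := Bᵀ) fun j i => hB i j
  exact Prod.ext (hx.toMixed_smul (inv_ne_zero hb.ne')) (hy.toMixed_smul (inv_ne_zero ha.ne'))

lemma bestResponseCondition_toMixed (h : (x, y) ∈ equilibriumPoints A B) (hx0 : x ≠ 0)
    (hy0 : y ≠ 0) :
    BestResponseCondition (toMixed x) (A *ᵥ toMixed y) (∑ j, y j)⁻¹ ∧
      BestResponseCondition (toMixed y) (Bᵀ *ᵥ toMixed x) (∑ i, x i)⁻¹ := by
  obtain ⟨hx, hy, hbrx, hbry⟩ := mk_mem_equilibriumPoints.1 h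
  have hrow := hbrx.smul (∑ i, x i)⁻¹ (inv_nonneg.2 (Fintype.sum_pos (hy.lt_of_ne' hy0)).le)
  have hcol := hbry.smul (∑ j, y j)⁻¹ (inv_nonneg.2 (Fintype.sum_pos (hx.lt_of_ne' hx0)).le)
  rw [mul_one, ← mulVec_smul] at hrow hcol
  exact ⟨hrow, hcol⟩

lemma isNash_toMixed (h : (x, y) ∈ equilibriumPoints A B) (hx0 : x ≠ 0) (hy0 : y ≠ 0) :
    IsNash A B (toMixed x) (toMixed y) := by
  obtain ⟨hx, hy, -⟩ := mk_mem_equilibriumPoints.1 h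
  obtain ⟨hbrx, hbry⟩ := bestResponseCondition_toMixed h hx0 hy0
  have hmx := isMixed_toMixed hx hx0
  have hmy := isMixed_toMixed hy hy0
  refine isNash_iff.2 ⟨hmx, hmy, ?_, ?_⟩
  · rwa [hbrx.dotProduct_eq hmx]
  · rwa [hbry.dotProduct_eq hmy]

lemma divPayoff_toMixed (h : (x, y) ∈ equilibriumPoints A B) (hx0 : x ≠ 0) (hy0 : y ≠ 0) :
    divPayoff A B (toMixed x, toMixed y) = (x, y) := by
  obtain ⟨hx, hy, -⟩ := mk_mem_equilibriumPoints.1 h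
  obtain ⟨hbrx, hbry⟩ := bestResponseCondition_toMixed h hx0 hy0
  rw [divPayoff, hbrx.dotProduct_eq (isMixed_toMixed hx hx0),
    hbry.dotProduct_eq (isMixed_toMixed hy hy0), inv_inv, inv_inv]
  exact Prod.ext (smul_inv_smul₀ (Fintype.sum_pos (hx.lt_of_ne' hx0)).ne' x)
    (smul_inv_smul₀ (Fintype.sum_pos (hy.lt_of_ne' hy0)).ne' y)

lemma bijOn_divPayoff (hA : ∀ i j, 0 < A i j) (hB : ∀ i j, 0 < B i j) :
    Set.BijOn (divPayoff A B) {p | IsNash A B p.1 p.2} (equilibriumPoints A B \ {0}) := by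
  refine Set.InvOn.bijOn (f' := Prod.map toMixed toMixed)
    ⟨fun p hp => toMixed_divPayoff hp.1 hp.2.1 hA hB, fun p hp => ?_⟩
    (fun p hp => IsNash.divPayoff_mem hp hA hB) (fun p hp => ?_)
  all_goals obtain ⟨hx0, hy0⟩ := ne_zero_of_mk_mem_equilibriumPoints hp.1 hp.2
  exacts [divPayoff_toMixed hp.1 hx0 hy0, isNash_toMixed hp.1 hx0 hy0]

theorem finite_and_odd_ncard_isNash_of_pos [Nonempty ι] [Nonempty κ] (hA : ∀ i j, 0 < A i j)
    (hB : ∀ i j, 0 < B i j) (hnd : Nondegenerate A B) :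
    {p : (ι → ℝ) × (κ → ℝ) | IsNash A B p.1 p.2}.Finite ∧
      Odd {p : (ι → ℝ) × (κ → ℝ) | IsNash A B p.1 p.2}.ncard := by
  have hbij := bijOn_divPayoff hA hB
  have hsimple := (isSimplePolytope_bestResponsePolytope (fun j i => hB i j) hnd.1).prod
    (isSimplePolytope_bestResponsePolytope hA hnd.2)
  have hlabels : Fintype.card (ι ⊕ κ) = finrank ℝ ((ι → ℝ) × (κ → ℝ)) := by simp
  have hfin : (equilibriumPoints A B).Finite := hsimple.finite_completelyLabelled hlabels _
  have heven : Even (equilibriumPoints A B).ncard := hsimple.even_ncard_completelyLabelled hlabels _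
  rw [hbij.finite_iff_finite, hbij.ncard_eq]
  refine ⟨hfin.sdiff, ?_⟩
  rwa [← Set.ncard_sdiff_singleton_add_one zero_mem_equilibriumPoints hfin, Nat.even_add_one,
    Nat.not_even_iff_odd] at heven

lemma isNash_add_const_iff (a b : ℝ) :
    IsNash (A + of fun _ _ => a) (B + of fun _ _ => b) x y ↔ IsNash A B x y := by
  refine and_congr_right fun hx => and_congr_right fun hy => and_congr ?_ ?_
  · refine forall₂_congr fun x' hx' => ?_
    simp only [hy.add_const_mulVec, dotProduct_add, hx.dotProduct_const, hx'.dotProduct_const,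
      add_le_add_iff_right]
  · refine forall₂_congr fun y' hy' => ?_
    simp only [hy.add_const_mulVec, hy'.add_const_mulVec, dotProduct_add, add_le_add_iff_right]

lemma IsMixed.bestresp1_add_const (hy : IsMixed y) (A : Matrix ι κ ℝ) (c : ℝ) :
    bestresp1 (A + of fun _ _ => c) y = bestresp1 A y := by
  simp only [bestresp1, hy.add_const_mulVec, Pi.add_apply, add_le_add_iff_right]

lemma Nondegenerate.add_const (hnd : Nondegenerate A B) (a b : ℝ) :
    Nondegenerate (A + of fun _ _ => a) (B + of fun _ _ => b) :=
  ⟨fun x hx => (congrArg Finset.card (hx.bestresp1_add_const Bᵀ b)).trans_le (hnd.1 x hx),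
    fun y hy => (congrArg Finset.card (hy.bestresp1_add_const A a)).trans_le (hnd.2 y hy)⟩

lemma exists_forall_add_pos {ι κ : Type*} [Finite ι] [Finite κ] (A : Matrix ι κ ℝ) :
    ∃ c, ∀ i j, 0 < A i j + c := by
  obtain ⟨b, hb⟩ := (Set.finite_range fun p : ι × κ => A p.1 p.2).bddBelow
  refine ⟨1 - b, fun i j => ?_⟩
  have hij : b ≤ A i j := hb ⟨(i, j), rfl⟩
  linarith

theorem odd_number_of_nash_equilibria_general [Nonempty ι] [Nonempty κ] (A B : Matrix ι κ ℝ)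
    (hnd : Nondegenerate A B) :
    Set.Finite {p : (ι → ℝ) × (κ → ℝ) | IsNash A B p.1 p.2} ∧
      Odd {p : (ι → ℝ) × (κ → ℝ) | IsNash A B p.1 p.2}.ncard := by
  obtain ⟨a, ha⟩ := exists_forall_add_pos A
  obtain ⟨b, hb⟩ := exists_forall_add_pos B
  have hshift := finite_and_odd_ncard_isNash_of_pos (A := A + of fun _ _ => a)
    (B := B + of fun _ _ => b) ha hb (hnd.add_const a b)
  simpa only [isNash_add_const_iff] using hshift

end Game

/-- Any nondegenerate bimatrix game has a finite and odd number of Nash equilibria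
(in particular at least one Nash equilibrium exists). -/
theorem odd_number_of_nash_equilibria {m n : ℕ} (hm : 0 < m) (hn : 0 < n)
    (A B : Matrix (Fin m) (Fin n) ℝ) (hnd : Nondegenerate A B) :
    Set.Finite {p : (Fin m → ℝ) × (Fin n → ℝ) | IsNash A B p.1 p.2} ∧
    Odd {p : (Fin m → ℝ) × (Fin n → ℝ) | IsNash A B p.1 p.2}.ncard := by
  have := Fin.pos_iff_nonempty.1 hm
  have := Fin.pos_iff_nonempty.1 hn
  exact odd_number_of_nash_equilibria_general A B hnd
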